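/- arXiv:1604.00775 — 2 statements merged into one kernel-verified Lean document; each statement's English description precedes it below -/
import Mathlib

section
/- One-side broadcastable observables are mutually nondisturbing: if A and B are observables on ℂ^n and there exists a broadcasting channel Λ with Λ*(A(x) ⊗ 1) = A(x) and Λ*(1 ⊗ B(y)) = B(y) for all outcomes x, y, then A can be measured without disturbing B and B can be measured without disturbing A. -/
open Matrix
open scoped Kronecker ComplexOrder

noncomputable section

abbrev Mat (n : ℕ) : Type := Matrix (Fin n) (Fin n) ℂ

/-- Observable `A` can be measured without disturbing observable `B`. -/
def CanMeasureWithoutDisturbing {n : ℕ} {ΩA ΩB : Type} [Fintype ΩA] [Fintype ΩB]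
    (A : ΩA → Mat n) (B : ΩB → Mat n) : Prop :=
  ∃ (m : ℕ) (K : ΩA → Fin m → Mat n),
    (∀ x, ∑ i, (K x i)ᴴ * K x i = A x) ∧
    (∀ y, ∑ x, ∑ i, (K x i)ᴴ * B y * K x i = B y)

/-!
Reading the first output of the broadcasting channel with `A` and keeping the second one is an
instrument, with Heisenberg dual `X ↦ Λ*(A(x) ⊗ X)` at the outcome `x`. At `X = 1` it gives
`Λ*(A(x) ⊗ 1) = A(x)`, so it implements `A`; summed over `x` it gives `Λ*(1 ⊗ B(y)) = B(y)`, so it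
does not disturb `B`. Its Kraus operators are `(⟨a| S ⊗ 1) K_i`, where `A(x) = Sᴴ S`. Exchanging
the two outputs of the channel exchanges the roles of `A` and `B`.
-/

lemma sum_kronecker {R Ω k l m n : Type*} [NonUnitalNonAssocSemiring R] (s : Finset Ω)
    (X : Ω → Matrix k l R) (Y : Matrix m n R) :
    (∑ x ∈ s, X x) ⊗ₖ Y = ∑ x ∈ s, X x ⊗ₖ Y := by
  ext ⟨_, _⟩ ⟨_, _⟩
  simp only [Matrix.sum_apply, kronecker_apply, Finset.sum_mul]

section KrausDual

variable {R ι κ Ω k l m n : Type*} [Fintype ι] [Fintype κ] [Fintype k] [Fintype l] [Fintype m]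

section Semiring

variable [Semiring R] [StarRing R]

/-- The Heisenberg dual `X ↦ ∑ i, Kᵢᴴ X Kᵢ` of the completely positive map with Kraus operators
`Kᵢ`, which goes from matrices over `n` to matrices over `m`. -/
def krausDual (K : ι → Matrix m n R) (X : Matrix m m R) : Matrix n n R :=
  ∑ i, (K i)ᴴ * X * K i

lemma krausDual_one [DecidableEq m] (K : ι → Matrix m n R) :
    krausDual K 1 = ∑ i, (K i)ᴴ * K i := by
  simp only [krausDual, Matrix.mul_one]

lemma krausDual_sum (K : ι → Matrix m n R) (s : Finset Ω) (X : Ω → Matrix m m R) :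
    krausDual K (∑ x ∈ s, X x) = ∑ x ∈ s, krausDual K (X x) := by
  simp only [krausDual, Matrix.mul_sum, Matrix.sum_mul]
  exact Finset.sum_comm

lemma krausDual_comp_equiv (K : ι → Matrix m n R) (e : κ ≃ ι) (X : Matrix m m R) :
    krausDual (K ∘ e) X = krausDual K X :=
  e.sum_comp fun i => (K i)ᴴ * X * K i

/-- The block of rows of `M` with first index `a` is `(⟨a| ⊗ 1) M`, and the `⟨a| ⊗ 1` are the Kraus
operators of the partial trace over the first factor. -/
lemma krausDual_submatrix_prodMk [DecidableEq l] (M : Matrix (l × m) n R) (X : Matrix m m R) :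
    krausDual (fun a => M.submatrix (Prod.mk a) id) X = Mᴴ * ((1 : Matrix l l R) ⊗ₖ X) * M := by
  ext i j
  simp [krausDual, Matrix.sum_apply, Matrix.mul_apply, Fintype.sum_prod_type, Matrix.one_apply]

/-- The Kraus operators `(⟨a| S ⊗ 1) Kᵢ`: apply the channel `K`, then the operation with the single
Kraus operator `S` to the first output, and discard that output. -/
def firstOutputKraus [DecidableEq m] (S : Matrix l k R) (K : ι → Matrix (k × m) n R)
    (p : ι × l) : Matrix m n R :=
  ((S ⊗ₖ (1 : Matrix m m R)) * K p.1).submatrix (Prod.mk p.2) id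

end Semiring

section CommSemiring

variable [CommSemiring R] [StarRing R]

lemma krausDual_submatrix_swap (K : ι → Matrix (m × k) n R) (X : Matrix k k R)
    (Y : Matrix m m R) :
    krausDual (fun i => (K i).submatrix Prod.swap id) (X ⊗ₖ Y) = krausDual K (Y ⊗ₖ X) := by
  have kronecker_swap :
      X ⊗ₖ Y = (Y ⊗ₖ X).submatrix (Equiv.prodComm k m) (Equiv.prodComm k m) := by
    ext
    exact mul_comm _ _
  refine Finset.sum_congr rfl fun i _ => ?_
  rw [kronecker_swap, ← Equiv.coe_prodComm, conjTranspose_submatrix, submatrix_mul_equiv,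
    submatrix_mul_equiv, submatrix_id_id]

lemma krausDual_firstOutputKraus [DecidableEq m] (S : Matrix l k R)
    (K : ι → Matrix (k × m) n R) (X : Matrix m m R) :
    krausDual (firstOutputKraus S K) X = krausDual K ((Sᴴ * S) ⊗ₖ X) := by
  classical
  have kronecker_conj : (S ⊗ₖ (1 : Matrix m m R))ᴴ * ((1 : Matrix l l R) ⊗ₖ X) *
      (S ⊗ₖ (1 : Matrix m m R)) = (Sᴴ * S) ⊗ₖ X := by
    simp only [conjTranspose_kronecker, ← mul_kronecker_mul, conjTranspose_one, Matrix.mul_one,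
      Matrix.one_mul]
  calc krausDual (firstOutputKraus S K) X
      = ∑ i, krausDual (fun a => ((S ⊗ₖ (1 : Matrix m m R)) * K i).submatrix (Prod.mk a) id) X :=
        Fintype.sum_prod_type _
    _ = krausDual K ((Sᴴ * S) ⊗ₖ X) := by
        refine Finset.sum_congr rfl fun i _ => ?_
        rw [krausDual_submatrix_prodMk, ← kronecker_conj, conjTranspose_mul]
        simp only [Matrix.mul_assoc]

end CommSemiring

end KrausDual

section Nondisturbance

variable {R 𝕜 ΩA ΩB ι d e : Type*} [Semiring R] [StarRing R] [RCLike 𝕜] [Fintype ΩA] [Fintype ι]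
  [Fintype d] [Fintype e] [DecidableEq e]

/-- `CanMeasureWithoutDisturbing` with entries in a star semiring `R` in place of `ℂ`, an arbitrary
finite index type `d` in place of `Fin n`, and outcome types in any universe. -/
def MeasurableWithoutDisturbing (A : ΩA → Matrix d d R) (B : ΩB → Matrix d d R) : Prop :=
  ∃ (m : ℕ) (K : ΩA → Fin m → Matrix d d R),
    (∀ x, ∑ i, (K x i)ᴴ * K x i = A x) ∧ (∀ y, ∑ x, krausDual (K x) (B y) = B y)

variable [DecidableEq d]

lemma MeasurableWithoutDisturbing.of_krausDual {A : ΩA → Matrix d d R} {B : ΩB → Matrix d d R}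
    (K : ΩA → ι → Matrix d d R) (implements : ∀ x, krausDual (K x) 1 = A x)
    (nondisturbing : ∀ y, ∑ x, krausDual (K x) (B y) = B y) :
    MeasurableWithoutDisturbing A B := by
  refine ⟨Fintype.card ι, fun x => K x ∘ (Fintype.equivFin ι).symm, fun x => ?_, fun y => ?_⟩
  · rw [← krausDual_one, krausDual_comp_equiv, implements]
  · simp only [krausDual_comp_equiv, nondisturbing]

open scoped MatrixOrder in
theorem MeasurableWithoutDisturbing.of_channel {A : ΩA → Matrix d d 𝕜} {B : ΩB → Matrix d d 𝕜}
    {A' : ΩA → Matrix e e 𝕜} (pos : ∀ x, (A' x).PosSemidef) (sum_eq_one : ∑ x, A' x = 1)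
    (K : ι → Matrix (e × d) d 𝕜) (hA : ∀ x, krausDual K (A' x ⊗ₖ (1 : Matrix d d 𝕜)) = A x)
    (hB : ∀ y, krausDual K ((1 : Matrix e e 𝕜) ⊗ₖ B y) = B y) :
    MeasurableWithoutDisturbing A B := by
  choose S hS using fun x => CStarAlgebra.nonneg_iff_eq_star_mul_self.mp (pos x).nonneg
  have dual_instrument (x : ΩA) (X : Matrix d d 𝕜) :
      krausDual (firstOutputKraus (S x) K) X = krausDual K (A' x ⊗ₖ X) := by
    rw [krausDual_firstOutputKraus, hS, star_eq_conjTranspose]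
  refine .of_krausDual (fun x => firstOutputKraus (S x) K) (fun x => ?_) fun y => ?_
  · rw [dual_instrument, hA]
  · calc ∑ x, krausDual (firstOutputKraus (S x) K) (B y)
        = krausDual K (∑ x, A' x ⊗ₖ B y) := by simp only [dual_instrument, krausDual_sum]
      _ = krausDual K ((1 : Matrix e e 𝕜) ⊗ₖ B y) := by rw [← sum_eq_one, sum_kronecker]
      _ = B y := hB y

theorem one_side_broadcastable_implies_mutually_nondisturbing_general [Fintype ΩB]
    {A : ΩA → Matrix d d 𝕜} {B : ΩB → Matrix d d 𝕜}
    (hApos : ∀ x, (A x).PosSemidef) (hAsum : ∑ x, A x = 1)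
    (hBpos : ∀ y, (B y).PosSemidef) (hBsum : ∑ y, B y = 1)
    (K : ι → Matrix (d × d) d 𝕜)
    (hA : ∀ x, krausDual K (A x ⊗ₖ (1 : Matrix d d 𝕜)) = A x)
    (hB : ∀ y, krausDual K ((1 : Matrix d d 𝕜) ⊗ₖ B y) = B y) :
    MeasurableWithoutDisturbing A B ∧ MeasurableWithoutDisturbing B A := by
  refine ⟨.of_channel hApos hAsum K hA hB,
    .of_channel hBpos hBsum (fun i => (K i).submatrix Prod.swap id) ?_ ?_⟩
  · simpa only [krausDual_submatrix_swap] using hB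
  · simpa only [krausDual_submatrix_swap] using hA

end Nondisturbance

/-- One-side broadcastable observables are mutually nondisturbing. -/
theorem one_side_broadcastable_implies_mutually_nondisturbing {n : ℕ}
    {ΩA ΩB : Type} [Fintype ΩA] [Fintype ΩB]
    (A : ΩA → Mat n) (B : ΩB → Mat n)
    (hApos : ∀ x, (A x).PosSemidef) (hAsum : ∑ x, A x = 1)
    (hBpos : ∀ y, (B y).PosSemidef) (hBsum : ∑ y, B y = 1)
    (hbc : ∃ (m : ℕ) (K : Fin m → Matrix (Fin n × Fin n) (Fin n) ℂ),
      (∑ i, (K i)ᴴ * K i = 1) ∧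
      (∀ x, ∑ i, (K i)ᴴ * (A x ⊗ₖ (1 : Mat n)) * K i = A x) ∧
      (∀ y, ∑ i, (K i)ᴴ * ((1 : Mat n) ⊗ₖ B y) * K i = B y)) :
    CanMeasureWithoutDisturbing A B ∧ CanMeasureWithoutDisturbing B A := by
  obtain ⟨_, K, -, hA, hB⟩ := hbc
  exact one_side_broadcastable_implies_mutually_nondisturbing_general
    hApos hAsum hBpos hBsum K hA hB
end
end

section
/- An informationally complete observable cannot be measured without disturbing itself: let n ≥ 2 and let A be an informationally complete observable on ℂ^n. Then there is no instrument implementing A, with Kraus families (K_{x,i})_i satisfying ∑_i K_{x,i}ᴴ K_{x,i} = A(x), such that ∑_{x,i} K_{x,i}ᴴ A(x') K_{x,i} = A(x') for every outcome x'. -/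
open Matrix
open scoped Kronecker ComplexOrder

noncomputable section

/-- An observable is informationally complete if its outcome statistics separate
density matrices. -/
def InfoComplete {n : ℕ} {ΩA : Type} [Fintype ΩA] (A : ΩA → Mat n) : Prop :=
  ∀ ρ σ : Mat n, ρ.PosSemidef → ρ.trace = 1 → σ.PosSemidef → σ.trace = 1 →
    (∀ x, (ρ * A x).trace = (σ * A x).trace) → ρ = σ

/-!
Averaged over outcomes, an instrument acts on states by `Φ ρ = ∑ K ρ Kᴴ`. If its Heisenberg dual
fixes an informationally complete observable, then `Φ ρ` and `ρ` have the same outcome statistics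
for every state `ρ`, so `Φ` is the identity. For such a `Φ` the sum of the `[K, X] [K, X]ᴴ` vanishes
for every matrix `X`, so the Kraus operators commute with everything, i.e. are scalar. The
observable measured by the instrument is then a multiple of the identity at every outcome, and such
an observable cannot tell any two states apart.
-/

section KrausMap

variable {R ι m n : Type*} [CommRing R] [StarRing R] [Fintype ι]

/-- The completely positive map `X ↦ ∑ a, K a * X * (K a)ᴴ` with Kraus family `K`, acting on states.
The dual map, acting on observables, is the one with Kraus family `fun a ↦ (K a)ᴴ`. -/
def krausMap [Fintype n] (K : ι → Matrix m n R) : Matrix n n R →ₗ[R] Matrix m m R where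
  toFun X := ∑ a, K a * X * (K a)ᴴ
  map_add' X Y := by
    simp only [Matrix.mul_add, Matrix.add_mul, Finset.sum_add_distrib]
  map_smul' c X := by
    simp only [Matrix.mul_smul, Matrix.smul_mul, Finset.smul_sum, RingHom.id_apply]

lemma krausMap_apply [Fintype n] (K : ι → Matrix m n R) (X : Matrix n n R) :
    krausMap K X = ∑ a, K a * X * (K a)ᴴ := rfl

lemma krausMap_conjTranspose_apply [Fintype m] (K : ι → Matrix m n R) (X : Matrix m m R) :
    krausMap (fun a ↦ (K a)ᴴ) X = ∑ a, (K a)ᴴ * X * K a := by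
  simp only [krausMap_apply, conjTranspose_conjTranspose]

lemma trace_krausMap_mul [Fintype m] [Fintype n] (K : ι → Matrix m n R) (X : Matrix n n R)
    (Y : Matrix m m R) :
    (krausMap K X * Y).trace = (X * krausMap (fun a ↦ (K a)ᴴ) Y).trace := by
  rw [krausMap_conjTranspose_apply, krausMap_apply, Finset.sum_mul, Finset.mul_sum, trace_sum,
    trace_sum]
  refine Finset.sum_congr rfl fun a _ ↦ ?_
  rw [Matrix.mul_assoc, Matrix.mul_assoc, trace_mul_comm]
  simp only [Matrix.mul_assoc]

lemma trace_krausMap [Fintype m] [Fintype n] [DecidableEq n] {K : ι → Matrix m n R}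
    (hK : ∑ a, (K a)ᴴ * K a = 1) (X : Matrix n n R) : (krausMap K X).trace = X.trace := by
  classical
  simpa only [krausMap_conjTranspose_apply, Matrix.mul_one, hK] using trace_krausMap_mul K X 1

lemma posSemidef_krausMap [Finite m] [Fintype n] [PartialOrder R] [StarOrderedRing R]
    (K : ι → Matrix m n R) {X : Matrix n n R} (hX : X.PosSemidef) : (krausMap K X).PosSemidef :=
  posSemidef_sum _ fun a _ ↦ hX.mul_mul_conjTranspose_same (K a)

lemma sum_commutator_mul_conjTranspose [Fintype n] [DecidableEq n] (K : ι → Matrix n n R)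
    (X : Matrix n n R) :
    ∑ a, (K a * X - X * K a) * (K a * X - X * K a)ᴴ =
      krausMap K (X * Xᴴ) - krausMap K X * Xᴴ - X * krausMap K Xᴴ + X * krausMap K 1 * Xᴴ := by
  simp only [krausMap_apply, Finset.mul_sum, Finset.sum_mul, ← Finset.sum_sub_distrib,
    ← Finset.sum_add_distrib]
  refine Finset.sum_congr rfl fun a _ ↦ ?_
  simp only [conjTranspose_sub, conjTranspose_mul]
  noncomm_ring

end KrausMap

section KrausMapEqId

variable {𝕜 ι n : Type*} [RCLike 𝕜] [Fintype ι] [Fintype n]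

open scoped MatrixOrder in
lemma commute_of_krausMap_eq_id {K : ι → Matrix n n 𝕜} (hK : krausMap K = LinearMap.id)
    (a : ι) (X : Matrix n n 𝕜) : Commute (K a) X := by
  have hsum : ∑ b, (K b * X - X * K b) * (K b * X - X * K b)ᴴ = 0 := by
    classical
    rw [sum_commutator_mul_conjTranspose, hK]
    simp only [LinearMap.id_apply, Matrix.mul_one, sub_self, zero_sub, neg_add_cancel]
  have hzero := (Finset.sum_eq_zero_iff_of_nonneg fun b _ ↦
    (posSemidef_self_mul_conjTranspose (K b * X - X * K b)).nonneg).1 hsum a (Finset.mem_univ a)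
  exact sub_eq_zero.1 (self_mul_conjTranspose_eq_zero.1 hzero)

lemma exists_eq_smul_one_of_krausMap_eq_id [DecidableEq n] {K : ι → Matrix n n 𝕜}
    (hK : krausMap K = LinearMap.id) : ∃ c : ι → 𝕜, ∀ a, K a = c a • 1 := by
  choose c hc using fun a ↦ mem_range_scalar_of_commute_single fun i j _ ↦
    (commute_of_krausMap_eq_id hK a (single i j 1)).symm
  exact ⟨c, fun a ↦ by rw [← hc a, smul_one_eq_diagonal]; rfl⟩

end KrausMapEqId

open scoped MatrixOrder Matrix.Norms.L2Operator in
lemma linearMap_ext_of_posSemidef_of_trace_eq_one {n M : Type*} [Fintype n]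
    [AddCommMonoid M] [Module ℂ M] {f g : Matrix n n ℂ →ₗ[ℂ] M}
    (h : ∀ ρ : Matrix n n ℂ, ρ.PosSemidef → ρ.trace = 1 → f ρ = g ρ) : f = g := by
  classical
  refine LinearMap.ext_on CStarAlgebra.span_nonneg fun X hX ↦ ?_
  have hX : X.PosSemidef := nonneg_iff_posSemidef.1 hX
  obtain htr | htr := eq_or_ne X.trace 0
  · rw [hX.trace_eq_zero_iff.1 htr, map_zero, map_zero]
  · have hnormalized : f (X.trace⁻¹ • X) = g (X.trace⁻¹ • X) :=
      h _ (hX.smul (inv_nonneg.2 hX.trace_nonneg)) (by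
        rw [trace_smul, smul_eq_mul, inv_mul_cancel₀ htr])
    rw [← smul_inv_smul₀ htr X, map_smul, hnormalized, ← map_smul]

section InfoComplete

variable {n : ℕ} {Ω : Type} [Fintype Ω]

lemma InfoComplete.krausMap_eq_id {A : Ω → Mat n} (hA : InfoComplete A) {ι : Type*} [Fintype ι]
    {K : ι → Mat n} (hK : ∑ a, (K a)ᴴ * K a = 1)
    (hfix : ∀ x, krausMap (fun a ↦ (K a)ᴴ) (A x) = A x) : krausMap K = LinearMap.id :=
  linearMap_ext_of_posSemidef_of_trace_eq_one fun ρ hρ htr ↦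
    hA _ ρ (posSemidef_krausMap K hρ) ((trace_krausMap hK ρ).trans htr) hρ htr fun x ↦ by
      rw [trace_krausMap_mul, hfix]

lemma not_infoComplete_smul_one [Nontrivial (Fin n)] (c : Ω → ℂ) :
    ¬ InfoComplete fun x ↦ c x • (1 : Mat n) := by
  intro h
  obtain ⟨i, j, hij⟩ := exists_pair_ne (Fin n)
  have hpos (k : Fin n) : (diagonal (Pi.single k 1) : Mat n).PosSemidef :=
    PosSemidef.diagonal (Pi.single_nonneg.2 zero_le_one)
  have htr (k : Fin n) : (diagonal (Pi.single k 1) : Mat n).trace = 1 := by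
    rw [trace_diagonal, Finset.sum_pi_single']
    simp
  have heq := h _ _ (hpos i) (htr i) (hpos j) (htr j) fun x ↦ by
    simp only [Matrix.mul_smul, Matrix.mul_one, trace_smul, htr]
  have hentry := congrFun (diagonal_injective heq) i
  simp [hij] at hentry

end InfoComplete

/-- An informationally complete observable on ℂ^n (n ≥ 2) cannot be
measured without disturbing itself. -/
theorem info_complete_disturbs_itself {n : ℕ} (hn : 2 ≤ n)
    {ΩA : Type} [Fintype ΩA] (A : ΩA → Mat n)
    (hApos : ∀ x, (A x).PosSemidef) (hAsum : ∑ x, A x = 1)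
    (hIC : InfoComplete A) :
    ¬ ∃ (m : ℕ) (K : ΩA → Fin m → Mat n),
      (∀ x, ∑ i, (K x i)ᴴ * K x i = A x) ∧
      (∀ x', ∑ x, ∑ i, (K x i)ᴴ * A x' * K x i = A x') := by
  rintro ⟨m, K, hK, hfix⟩
  have : Nontrivial (Fin n) := Fin.nontrivial_iff_two_le.2 hn
  have hid : krausMap (fun p : ΩA × Fin m ↦ K p.1 p.2) = LinearMap.id :=
    hIC.krausMap_eq_id (by simp only [Fintype.sum_prod_type, hK, hAsum]) fun x ↦ by
      rw [krausMap_conjTranspose_apply, Fintype.sum_prod_type, hfix]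
  obtain ⟨c, hc⟩ := exists_eq_smul_one_of_krausMap_eq_id hid
  have hA : A = fun x ↦ (∑ i, c (x, i) * star (c (x, i))) • (1 : Mat n) := by
    funext x
    rw [← hK x, Finset.sum_smul]
    refine Finset.sum_congr rfl fun i _ ↦ ?_
    simp [hc (x, i), smul_smul]
  exact not_infoComplete_smul_one _ (hA ▸ hIC)
end
end
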